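/- arXiv:1509.01768 — 7 statements merged into one kernel-verified Lean document; each statement's English description precedes it below -/
import Mathlib

section
/- Let r₁₀ := arctan(√((4/√3)·cos((1/3)·arctan(√687/9)) + 3)). Then x := tan²(r₁₀) satisfies the cubic equation x³ − 9x² + 23x − 16 = 0. -/
open Real

/-- With `r₁₀ = arctan(√((4/√3)·cos((1/3)·arctan(√687/9)) + 3))`, the number
`x = tan²(r₁₀)` satisfies the cubic equation `x³ − 9x² + 23x − 16 = 0`. -/
theorem stmt_2 :
    let r₁₀ : ℝ := Real.arctan (Real.sqrt
      (4 / Real.sqrt 3 * Real.cos ((1 / 3) * Real.arctan (Real.sqrt 687 / 9)) + 3))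
    let x : ℝ := Real.tan r₁₀ ^ 2
    x ^ 3 - 9 * x ^ 2 + 23 * x - 16 = 0 := by
  intro r x
  have h3 : (0 : ℝ) < √3 := by positivity
  have h3s : √3 ^ 2 = 3 := Real.sq_sqrt (by norm_num)
  have hc : Real.cos (Real.arctan (√687 / 9)) = 3 * √3 / 16 := by
    rw [Real.cos_arctan]
    have e : (1 : ℝ) + (√687 / 9) ^ 2 = (16 * √3 / 9) ^ 2 := by
      rw [div_pow, div_pow, mul_pow, h3s, Real.sq_sqrt (by norm_num)]; norm_num
    rw [e, Real.sqrt_sq (by positivity)]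
    field_simp
    rw [h3s]; norm_num
  have ht := Real.cos_three_mul ((1 / 3) * Real.arctan (√687 / 9))
  have e3 : 3 * ((1 / 3) * Real.arctan (√687 / 9)) = Real.arctan (√687 / 9) := by ring
  rw [e3, hc] at ht
  have hpos : 0 ≤ Real.cos ((1 / 3) * Real.arctan (√687 / 9)) := by
    have h1 := Real.arctan_lt_pi_div_two (√687 / 9)
    have h2 := Real.neg_pi_div_two_lt_arctan (√687 / 9)
    have := Real.pi_pos
    apply Real.cos_nonneg_of_neg_pi_div_two_le_of_le <;> linarith
  have hx : x = 4 / √3 * Real.cos ((1 / 3) * Real.arctan (√687 / 9)) + 3 := by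
    simp only [x, r]
    rw [Real.tan_arctan, Real.sq_sqrt (by positivity)]
  rw [hx]
  generalize Real.cos ((1 / 3) * Real.arctan (√687 / 9)) = c at *
  have hd : 4 / √3 = 4 * √3 / 3 := by
    field_simp; rw [h3s]
  rw [hd]
  generalize √3 = s at *
  linear_combination (64 / 27 * s * c ^ 3) * h3s - (16 / 9 * s) * ht + (1 / 3) * h3s
end

section
/- Let r₁₀ := arctan(√((4/√3)·cos((1/3)·arctan(√687/9)) + 3)). Then 1.154479 < r₁₀ < 1.154480; that is, r₁₀ lies in the interval [1.154479, 1.154480] obtained numerically by Danzer for the Tammes problem with N = 10. -/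
open Real

theorem cos_double_lower {x l : ℝ} (m y : ℝ) (h : l ≤ cos x) (hl : 0 ≤ l) (hy : y = 2 * x)
    (hm : m ≤ 2 * l ^ 2 - 1) : m ≤ cos y := by
  subst hy
  rw [cos_two_mul]
  nlinarith

theorem cos_double_upper {x u : ℝ} (m y : ℝ) (h : cos x ≤ u) (hx0 : 0 ≤ x) (hx : x ≤ 1)
    (hy : y = 2 * x) (hm : 2 * u ^ 2 - 1 ≤ m) : cos y ≤ m := by
  subst hy
  have := cos_pos_of_le_one (abs_le.2 ⟨by linarith, hx⟩)
  rw [cos_two_mul]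
  nlinarith

theorem cos_lower_val : 0.4043950854 ≤ cos (1.154479 : ℝ) := by
  have hb := abs_le.1 (cos_bound (x := 1.154479 / 8192) (by rw [abs_of_nonneg] <;> norm_num))
  rw [abs_of_nonneg (by norm_num)] at hb
  have h13 : 0.9999999900697040245059 ≤ cos (1.154479 / 8192 : ℝ) := by
    norm_num at hb ⊢
    linarith [hb.1, hb.2]
  have h12 := cos_double_lower 0.9999999602788162952451 (1.154479 / 4096) h13 (by norm_num) (by norm_num) (by norm_num) 
  have h11 := cos_double_lower 0.9999998411152683365252 (1.154479 / 2048) h12 (by norm_num) (by norm_num) (by norm_num) 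
  have h10 := cos_double_lower 0.9999993644611238348167 (1.154479 / 1024) h11 (by norm_num) (by norm_num) (by norm_num) 
  have h9 := cos_double_lower 0.9999974578453031585930 (1.154479 / 512) h10 (by norm_num) (by norm_num) (by norm_num) 
  have h8 := cos_double_lower 0.9999898313941377353773 (1.154479 / 256) h9 (by norm_num) (by norm_num) (by norm_num) 
  have h7 := cos_double_lower 0.9999593257833520318733 (1.154479 / 128) h8 (by norm_num) (by norm_num) (by norm_num) 
  have h6 := cos_double_lower 0.9998373064421919273448 (1.154479 / 64) h7 (by norm_num) (by norm_num) (by norm_num) 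
  have h5 := cos_double_lower 0.9993492787071552138765 (1.154479 / 32) h6 (by norm_num) (by norm_num) (by norm_num) 
  have h4 := cos_double_lower 0.9973979617050227786858 (1.154479 / 16) h5 (by norm_num) (by norm_num) (by norm_num) 
  have h3 := cos_double_lower 0.9896053880266681706731 (1.154479 / 8) h4 (by norm_num) (by norm_num) (by norm_num) 
  have h2 := cos_double_lower 0.9586376480228249495462 (1.154479 / 4) h3 (by norm_num) (by norm_num) (by norm_num) 
  have h1 := cos_double_lower 0.8379722804134672317957 (1.154479 / 2) h2 (by norm_num) (by norm_num) (by norm_num) 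
  have h0 := cos_double_lower 0.4043950854826931160744 (1.154479 / 1) h1 (by norm_num) (by norm_num) (by norm_num) 
  norm_num at h0 ⊢
  linarith

theorem cos_upper_val : cos (1.15448 : ℝ) ≤ 0.4043941731 := by
  have hb := abs_le.1 (cos_bound (x := 1.15448 / 8192) (by rw [abs_of_nonneg] <;> norm_num))
  rw [abs_of_nonneg (by norm_num)] at hb
  have h13 : cos (1.15448 / 8192 : ℝ) ≤ 0.9999999900696868625088 := by
    norm_num at hb ⊢
    linarith [hb.1, hb.2]
  have h12 := cos_double_upper 0.9999999602787476472575 (1.15448 / 4096) h13 (by norm_num) (by norm_num) (by norm_num) (by norm_num) 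
  have h11 := cos_double_upper 0.9999998411149937445858 (1.15448 / 2048) h12 (by norm_num) (by norm_num) (by norm_num) (by norm_num) 
  have h10 := cos_double_upper 0.9999993644600254672337 (1.15448 / 1024) h11 (by norm_num) (by norm_num) (by norm_num) (by norm_num) 
  have h9 := cos_double_upper 0.9999974578409096910533 (1.15448 / 512) h10 (by norm_num) (by norm_num) (by norm_num) (by norm_num) 
  have h8 := cos_double_upper 0.9999898313765639098941 (1.15448 / 256) h9 (by norm_num) (by norm_num) (by norm_num) (by norm_num) 
  have h7 := cos_double_upper 0.9999593257130574447465 (1.15448 / 128) h8 (by norm_num) (by norm_num) (by norm_num) (by norm_num) 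
  have h6 := cos_double_upper 0.9998373061610250155567 (1.15448 / 64) h7 (by norm_num) (by norm_num) (by norm_num) (by norm_num) 
  have h5 := cos_double_upper 0.9993492775826705430632 (1.15448 / 32) h6 (by norm_num) (by norm_num) (by norm_num) (by norm_num) 
  have h4 := cos_double_upper 0.9973979572100110024367 (1.15448 / 16) h5 (by norm_num) (by norm_num) (by norm_num) (by norm_num) 
  have h3 := cos_double_upper 0.9896053700934058771998 (1.15448 / 8) h4 (by norm_num) (by norm_num) (by norm_num) (by norm_num) 
  have h2 := cos_double_upper 0.9586375770354136306834 (1.15448 / 4) h3 (by norm_num) (by norm_num) (by norm_num) (by norm_num) 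
  have h1 := cos_double_upper 0.8379720082086572064470 (1.15448 / 2) h2 (by norm_num) (by norm_num) (by norm_num) (by norm_num) 
  have h0 := cos_double_upper 0.4043941730824997211674 (1.15448 / 1) h1 (by norm_num) (by norm_num) (by norm_num) (by norm_num) 
  norm_num at h0 ⊢
  linarith

theorem root_eq : ∃ y : ℝ, 4 / Real.sqrt 3 * Real.cos ((1 / 3) * Real.arctan (Real.sqrt 687 / 9)) = y ∧
    0 < y ∧ y ^ 3 - 4 * y = 1 := by
  set t := Real.arctan (Real.sqrt 687 / 9) with ht
  have hc : 0 < cos (1 / 3 * t) := by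
    apply cos_pos_of_mem_Ioo
    have h1 := arctan_lt_pi_div_two (Real.sqrt 687 / 9)
    have h2 := neg_pi_div_two_lt_arctan (Real.sqrt 687 / 9)
    constructor <;> linarith [pi_pos]
  have h3 : cos t = 4 * cos (1 / 3 * t) ^ 3 - 3 * cos (1 / 3 * t) := by
    rw [← cos_three_mul]; congr 1; ring
  have hs : 0 < Real.sqrt 3 := by positivity
  have hs2 : Real.sqrt 3 ^ 2 = 3 := sq_sqrt (by norm_num)
  have hct : cos t = 9 / (16 * Real.sqrt 3) := by
    have h := cos_sq_arctan (Real.sqrt 687 / 9)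
    rw [div_pow, sq_sqrt (by norm_num)] at h
    have hp := cos_arctan_pos (Real.sqrt 687 / 9)
    rw [← ht] at h hp
    rw [← sq_eq_sq₀ hp.le (by positivity), h, div_pow, mul_pow, hs2]
    norm_num
  refine ⟨_, rfl, by positivity, ?_⟩
  rw [hct] at h3
  generalize cos (1 / 3 * t) = c at *
  generalize Real.sqrt 3 = s at *
  have h4 : 9 = 16 * s * (4 * c ^ 3 - 3 * c) := by
    rw [← h3]; field_simp
  have h5 : 64 * c ^ 3 - 48 * c = 3 * s := by
    have : s * (64 * c ^ 3 - 48 * c) = s * (3 * s) := by linear_combination -h4 - 3 * hs2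
    exact mul_left_cancel₀ hs.ne' this
  have h6 : (4 / s * c) ^ 3 - 4 * (4 / s * c) = (64 * c ^ 3 - 16 * s ^ 2 * c) / s ^ 3 := by
    field_simp
    try ring
  rw [h6, hs2, div_eq_one_iff_eq (by positivity)]
  linear_combination h5 - s * hs2


/-- With `r₁₀ = arctan(√((4/√3)·cos((1/3)·arctan(√687/9)) + 3))`, one has
`1.154479 < r₁₀ < 1.154480`, i.e. `r₁₀` lies in Danzer's numerical interval for
the Tammes problem with `N = 10`. -/
theorem stmt_3 :
    let r₁₀ : ℝ := Real.arctan (Real.sqrt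
      (4 / Real.sqrt 3 * Real.cos ((1 / 3) * Real.arctan (Real.sqrt 687 / 9)) + 3))
    1.154479 < r₁₀ ∧ r₁₀ < 1.154480 := by
  obtain ⟨y, hy, hy0, hroot⟩ := root_eq
  rw [hy]
  intro r
  have hlo : 2.1149075 < y := by
    by_contra! h
    nlinarith [mul_nonneg hy0.le (sub_nonneg.2 h), mul_nonneg (sq_nonneg y) (sub_nonneg.2 h)]
  have hhi : y < 2.1149076 := by
    by_contra! h
    nlinarith [mul_nonneg hy0.le (sub_nonneg.2 h), mul_nonneg (sq_nonneg y) (sub_nonneg.2 h)]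
  have hcs : cos r ^ 2 = 1 / (1 + (y + 3)) := by
    rw [cos_sq_arctan, sq_sqrt (by linarith)]
  have hcp : 0 < cos r := cos_arctan_pos _
  have hr0 : 0 ≤ r := arctan_nonneg.2 (Real.sqrt_nonneg _)
  have hr1 : r < π / 2 := arctan_lt_pi_div_two _
  have hpi := pi_gt_three
  have hL := cos_lower_val
  have hU := cos_upper_val
  constructor
  · by_contra! h
    have h1 := cos_le_cos_of_nonneg_of_le_pi hr0 (by linarith) h
    have h2 : (0.4043950854 : ℝ) ^ 2 ≤ cos r ^ 2 := by
      apply pow_le_pow_left₀ (by norm_num); linarith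
    rw [hcs, le_div_iff₀ (by linarith)] at h2
    norm_num at h2
    linarith
  · by_contra! h
    have h1 := cos_le_cos_of_nonneg_of_le_pi (by norm_num) (by linarith) h
    have h2 : cos r ^ 2 ≤ (0.4043941731 : ℝ) ^ 2 := by
      apply pow_le_pow_left₀ hcp.le
      norm_num at h1 hU ⊢
      linarith
    rw [hcs, div_le_iff₀ (by linarith)] at h2
    norm_num at h2
    linarith
end

section
/- For every real r with 0 < r < π/2, the following identity holds: cos²r + sin²r · cos( arccos(cos r/(1 + cos r)) + arccos((cos r − 1)/(cos r + 1)) ) = (3cos³r + 2cos²r − cos r − 2(1 − cos²r)·√(cos r + 2cos²r)) / (1 + cos r)². (This computes, via the spherical cosine theorem, the cosine of the base s of a spherical isosceles triangle with legs of length r whose apex angle is the sum of the inner angle arccos(cos r/(1 + cos r)) of a spherical equilateral triangle of side r and the inner angle arccos((cos r − 1)/(cos r + 1)) of a spherical square of side r.) -/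
open Real

/-- The spherical-cosine-theorem identity: for `0 < r < π/2`,
`cos²r + sin²r·cos(arccos(cos r/(1+cos r)) + arccos((cos r−1)/(cos r+1)))`
equals `(3cos³r + 2cos²r − cos r − 2(1 − cos²r)√(cos r + 2cos²r))/(1 + cos r)²`. -/
theorem stmt_8 (r : ℝ) (hr : 0 < r) (hr' : r < Real.pi / 2) :
    Real.cos r ^ 2 + Real.sin r ^ 2 *
        Real.cos (Real.arccos (Real.cos r / (1 + Real.cos r)) +
          Real.arccos ((Real.cos r - 1) / (Real.cos r + 1)))
      = (3 * Real.cos r ^ 3 + 2 * Real.cos r ^ 2 - Real.cos r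
          - 2 * (1 - Real.cos r ^ 2) * Real.sqrt (Real.cos r + 2 * Real.cos r ^ 2))
        / (1 + Real.cos r) ^ 2 := by
  have hc : 0 < Real.cos r := Real.cos_pos_of_mem_Ioo ⟨by linarith, hr'⟩
  have hc1 : Real.cos r ≤ 1 := Real.cos_le_one r
  rw [Real.sin_sq]
  generalize Real.cos r = c at *
  have h1 : (0 : ℝ) < 1 + c := by linarith
  have h2 : (0 : ℝ) < c + 1 := by linarith
  rw [Real.cos_add, Real.cos_arccos, Real.cos_arccos, Real.sin_arccos, Real.sin_arccos]
  · have e : Real.sqrt (1 - (c / (1 + c)) ^ 2) * Real.sqrt (1 - ((c - 1) / (c + 1)) ^ 2)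
        = 2 * Real.sqrt (c + 2 * c ^ 2) / (1 + c) ^ 2 := by
      have a1 : 1 - (c / (1 + c)) ^ 2 = (1 + 2 * c) / (1 + c) ^ 2 := by
        field_simp
        ring
      have a2 : 1 - ((c - 1) / (c + 1)) ^ 2 = 2 ^ 2 * c / (1 + c) ^ 2 := by
        rw [add_comm c 1]
        field_simp
        ring
      have a3 : c + 2 * c ^ 2 = (1 + 2 * c) * c := by ring
      rw [a1, a2, a3, Real.sqrt_div (by positivity), Real.sqrt_div (by positivity),
        Real.sqrt_sq h1.le, Real.sqrt_mul (by positivity), Real.sqrt_mul (by positivity),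
        Real.sqrt_sq (by norm_num)]
      field_simp
    rw [e, add_comm c 1]
    field_simp
    ring
  · rw [le_div_iff₀ h2]; linarith
  · rw [div_le_one h2]; linarith
  · rw [le_div_iff₀ h1]; linarith
  · rw [div_le_one h1]; linarith
end

section
/- Fix r with 0 < r < π/2 and write c := cos r. Let M₁ := (0, 0, −1), M₃ := (sin r, 0, −c), M₄ := (−c(c − 1)/sin r, −(c − 1)√(2c + 1)/sin r, −c), and M₅ := (sin r·(c² − 2c − 1)/(c + 1)², 2c·sin r·√(2c + 1)/(c + 1)², −c). Then M₅ is a unit vector of ℝ³, ⟨M₅, M₁⟩ = c and ⟨M₅, M₄⟩ = c (so M₅ lies on the perimeters of the caps of angular radius r centered at M₁ and M₄), and ⟨M₅, M₃⟩ < c (so M₅ lies outside the open cap of angular radius r centered at M₃). -/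
open Real

/-- For `0 < r < π/2` with `c = cos r`: the point
`M₅ = (sin r·(c² − 2c − 1)/(c + 1)², 2c·sin r·√(2c + 1)/(c + 1)², −c)`
is a unit vector, lies on the perimeters of the caps of angular radius `r` centered at
`M₁ = (0,0,−1)` and `M₄ = (−c(c−1)/sin r, −(c−1)√(2c+1)/sin r, −c)`
(inner product `= c` with each), and lies outside the open cap centered at
`M₃ = (sin r, 0, −c)` (inner product `< c`). -/
theorem stmt_10 (r : ℝ) (hr : 0 < r) (hr' : r < Real.pi / 2) :
    let c := Real.cos r
    let s := Real.sin r
    let x₅ := s * (c ^ 2 - 2 * c - 1) / (c + 1) ^ 2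
    let y₅ := 2 * c * s * Real.sqrt (2 * c + 1) / (c + 1) ^ 2
    let z₅ := -c
    x₅ ^ 2 + y₅ ^ 2 + z₅ ^ 2 = 1 ∧
    x₅ * 0 + y₅ * 0 + z₅ * (-1) = c ∧
    x₅ * (-(c * (c - 1)) / s) + y₅ * (-((c - 1) * Real.sqrt (2 * c + 1)) / s) + z₅ * (-c) = c ∧
    x₅ * s + y₅ * 0 + z₅ * (-c) < c := by
  intro c s x₅ y₅ z₅
  have hc : 0 < c := Real.cos_pos_of_mem_Ioo ⟨by linarith, hr'⟩
  have hs : 0 < s := Real.sin_pos_of_pos_of_lt_pi hr (by linarith)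
  have hcs : s ^ 2 = 1 - c ^ 2 := by
    have := Real.sin_sq_add_cos_sq r
    change s ^ 2 + c ^ 2 = 1 at this
    linarith
  have hc1 : c < 1 := by nlinarith [pow_pos hs 2]
  have hq : Real.sqrt (2 * c + 1) ^ 2 = 2 * c + 1 := Real.sq_sqrt (by linarith)
  simp only [x₅, y₅, z₅]
  clear_value c s
  clear x₅ y₅ z₅
  generalize Real.sqrt (2 * c + 1) = q at *
  have hne : c + 1 ≠ 0 := by linarith
  have hsne : s ≠ 0 := hs.ne'
  refine ⟨?_, by ring, ?_, ?_⟩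
  · have e : (s * (c ^ 2 - 2 * c - 1) / (c + 1) ^ 2) ^ 2 + (2 * c * s * q / (c + 1) ^ 2) ^ 2
        + (-c) ^ 2
        = s ^ 2 * ((c ^ 2 - 2 * c - 1) ^ 2 + 4 * c ^ 2 * q ^ 2) / (c + 1) ^ 4 + c ^ 2 := by
      field_simp
      ring
    rw [e, hq, hcs]
    field_simp
    ring
  · have e : s * (c ^ 2 - 2 * c - 1) / (c + 1) ^ 2 * (-(c * (c - 1)) / s)
        + 2 * c * s * q / (c + 1) ^ 2 * (-((c - 1) * q) / s) + -c * -c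
        = -(c * (c - 1)) * ((c ^ 2 - 2 * c - 1) + 2 * q ^ 2) / (c + 1) ^ 2 + c ^ 2 := by
      field_simp
      ring
    rw [e, hq]
    field_simp
    ring
  · have e : s * (c ^ 2 - 2 * c - 1) / (c + 1) ^ 2 * s + 2 * c * s * q / (c + 1) ^ 2 * 0 + -c * -c
        = s ^ 2 * (c ^ 2 - 2 * c - 1) / (c + 1) ^ 2 + c ^ 2 := by
      ring
    have e2 : (1 - c ^ 2) * (c ^ 2 - 2 * c - 1) / (c + 1) ^ 2 + c ^ 2
        = c - (1 - c) * (3 * c + 1) / (c + 1) := by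
      field_simp
      ring
    rw [e, hcs, e2]
    have : 0 < (1 - c) * (3 * c + 1) / (c + 1) :=
      div_pos (mul_pos (by linarith) (by linarith)) (by linarith)
    linarith
end

section
/- Fix r with 0 < r < π/2 and write c := cos r and D := 9c³ − c² − c + 1. Let M₁ := (0, 0, −1), M₂ := (−c(c − 1)/sin r, (c − 1)√(2c + 1)/sin r, −c), M₅ := (sin r·(c² − 2c − 1)/(c + 1)², 2c·sin r·√(2c + 1)/(c + 1)², −c), and M₆ := (2c·sin r·(c − 1)(2c + 1)/D, 2c·sin r·(c − 1)√(2c + 1)/D, (−4c⁴ + c³ − 5c² − c + 1)/D). Then M₆ is a unit vector of ℝ³ and ⟨M₆, M₅⟩ = c and ⟨M₆, M₂⟩ = c (so M₆ lies on the perimeters of the caps of angular radius r centered at M₅ and M₂); moreover, if in addition c² < 1/5, then ⟨M₆, M₁⟩ < c (so M₆ lies outside the open cap of angular radius r centered at M₁). -/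
open Real

/-- For `0 < r < π/2` with `c = cos r` and `D = 9c³ − c² − c + 1`: the point
`M₆ = (2c·sin r·(c−1)(2c+1)/D, 2c·sin r·(c−1)√(2c+1)/D, (−4c⁴+c³−5c²−c+1)/D)`
is a unit vector, lies on the perimeters of the caps of angular radius `r` centered at
`M₅ = (sin r·(c²−2c−1)/(c+1)², 2c·sin r·√(2c+1)/(c+1)², −c)` and
`M₂ = (−c(c−1)/sin r, (c−1)√(2c+1)/sin r, −c)` (inner product `= c` with each);
moreover if `c² < 1/5` then `⟨M₆, M₁⟩ < c` for `M₁ = (0,0,−1)`. -/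
theorem stmt_11 (r : ℝ) (hr : 0 < r) (hr' : r < Real.pi / 2) :
    let c := Real.cos r
    let s := Real.sin r
    let D := 9 * c ^ 3 - c ^ 2 - c + 1
    let x₆ := 2 * c * s * (c - 1) * (2 * c + 1) / D
    let y₆ := 2 * c * s * (c - 1) * Real.sqrt (2 * c + 1) / D
    let z₆ := (-4 * c ^ 4 + c ^ 3 - 5 * c ^ 2 - c + 1) / D
    (x₆ ^ 2 + y₆ ^ 2 + z₆ ^ 2 = 1 ∧
     x₆ * (s * (c ^ 2 - 2 * c - 1) / (c + 1) ^ 2)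
       + y₆ * (2 * c * s * Real.sqrt (2 * c + 1) / (c + 1) ^ 2) + z₆ * (-c) = c ∧
     x₆ * (-(c * (c - 1)) / s) + y₆ * ((c - 1) * Real.sqrt (2 * c + 1) / s) + z₆ * (-c) = c)
    ∧ (c ^ 2 < 1 / 5 → x₆ * 0 + y₆ * 0 + z₆ * (-1) < c) := by
  intro c s D x₆ y₆ z₆
  have hc : 0 < c := Real.cos_pos_of_mem_Ioo ⟨by linarith, hr'⟩
  have hs : 0 < s := Real.sin_pos_of_pos_of_lt_pi hr (by linarith [Real.pi_pos])
  have hs2 : s ^ 2 = 1 - c ^ 2 := by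
    have := Real.sin_sq_add_cos_sq r
    simp only [s, c]; linarith
  have hc1 : c < 1 := by nlinarith
  have hD : 0 < D := by
    simp only [D]
    nlinarith [mul_nonneg hc.le (sq_nonneg (3 * c - 1)), sq_nonneg (2 * c - 1), sq_nonneg (c - 1)]
  have hDd : D = 9 * c ^ 3 - c ^ 2 - c + 1 := rfl
  have hq : Real.sqrt (2 * c + 1) ^ 2 = 2 * c + 1 := Real.sq_sqrt (by linarith)
  have hx : x₆ = 2 * c * s * (c - 1) * (2 * c + 1) / D := rfl
  have hy : y₆ = 2 * c * s * (c - 1) * Real.sqrt (2 * c + 1) / D := rfl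
  have hz : z₆ = (-4 * c ^ 4 + c ^ 3 - 5 * c ^ 2 - c + 1) / D := rfl
  clear_value x₆ y₆ z₆ D s c
  generalize Real.sqrt (2 * c + 1) = q at *
  have hD0 : D ≠ 0 := hD.ne'
  have hs0 : s ≠ 0 := hs.ne'
  have hc0 : c + 1 ≠ 0 := by positivity
  refine ⟨⟨?_, ?_, ?_⟩, ?_⟩
  · have e : x₆ ^ 2 + y₆ ^ 2 + z₆ ^ 2 = (4 * c ^ 2 * s ^ 2 * (c - 1) ^ 2 * ((2 * c + 1) ^ 2 + q ^ 2)
        + (-4 * c ^ 4 + c ^ 3 - 5 * c ^ 2 - c + 1) ^ 2) / D ^ 2 := by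
      rw [hx, hy, hz]; field_simp; ring
    rw [e, hs2, hq, div_eq_one_iff_eq (by positivity), hDd]; ring
  · have e : x₆ * (s * (c ^ 2 - 2 * c - 1) / (c + 1) ^ 2)
       + y₆ * (2 * c * s * q / (c + 1) ^ 2) + z₆ * (-c)
       = (2 * c * s ^ 2 * (c - 1) * ((2 * c + 1) * (c ^ 2 - 2 * c - 1) + 2 * c * q ^ 2)
        - c * (c + 1) ^ 2 * (-4 * c ^ 4 + c ^ 3 - 5 * c ^ 2 - c + 1)) / (D * (c + 1) ^ 2) := by
      rw [hx, hy, hz]; field_simp; ring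
    rw [e, hs2, hq, div_eq_iff (by positivity), hDd]; ring
  · have e : x₆ * (-(c * (c - 1)) / s) + y₆ * ((c - 1) * q / s) + z₆ * (-c)
       = (2 * c * (c - 1) * (-(2 * c + 1) * (c * (c - 1)) + (c - 1) * q ^ 2)
        - c * (-4 * c ^ 4 + c ^ 3 - 5 * c ^ 2 - c + 1)) / D := by
      rw [hx, hy, hz]; field_simp; ring
    rw [e, hq, div_eq_iff hD0, hDd]; ring
  · intro h
    have e : x₆ * 0 + y₆ * 0 + z₆ * (-1) = (-(-4 * c ^ 4 + c ^ 3 - 5 * c ^ 2 - c + 1)) / D := by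
      rw [hz]; ring
    rw [e, div_lt_iff₀ hD, hDd]
    have h2 : 0 < 1 - c ^ 2 := by nlinarith
    nlinarith [mul_pos h2 (show 0 < 1 - 5 * c ^ 2 by linarith)]
end

section
/- Fix r with 0 < r < π/2 and write c := cos r and D := 9c³ − c² − c + 1. Let M₂ := (−c(c − 1)/sin r, (c − 1)√(2c + 1)/sin r, −c), M₆ := (2c·sin r·(c − 1)(2c + 1)/D, 2c·sin r·(c − 1)√(2c + 1)/D, (−4c⁴ + c³ − 5c² − c + 1)/D), and M₇ := (sin r·(c³ − 5c² − c + 1)/D, −4 sin r·c²·√(2c + 1)/D, −c(c³ + 11c² − c − 3)/D). Then M₇ is a unit vector of ℝ³ and ⟨M₇, M₆⟩ = c and ⟨M₇, M₂⟩ = c (so M₇ is a cross point of the perimeters of the caps of angular radius r centered at M₆ and at M₂). -/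
open Real

/-- For `0 < r < π/2` with `c = cos r` and `D = 9c³ − c² − c + 1`: the point
`M₇ = (sin r·(c³−5c²−c+1)/D, −4 sin r·c²·√(2c+1)/D, −c(c³+11c²−c−3)/D)`
is a unit vector and lies on the perimeters of the caps of angular radius `r` centered at
`M₆ = (2c·sin r·(c−1)(2c+1)/D, 2c·sin r·(c−1)√(2c+1)/D, (−4c⁴+c³−5c²−c+1)/D)` and
`M₂ = (−c(c−1)/sin r, (c−1)√(2c+1)/sin r, −c)` (inner product `= c` with each). -/
theorem stmt_12 (r : ℝ) (hr : 0 < r) (hr' : r < Real.pi / 2) :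
    let c := Real.cos r
    let s := Real.sin r
    let D := 9 * c ^ 3 - c ^ 2 - c + 1
    let x₇ := s * (c ^ 3 - 5 * c ^ 2 - c + 1) / D
    let y₇ := -(4 * s * c ^ 2 * Real.sqrt (2 * c + 1)) / D
    let z₇ := -(c * (c ^ 3 + 11 * c ^ 2 - c - 3)) / D
    x₇ ^ 2 + y₇ ^ 2 + z₇ ^ 2 = 1 ∧
    x₇ * (2 * c * s * (c - 1) * (2 * c + 1) / D)
      + y₇ * (2 * c * s * (c - 1) * Real.sqrt (2 * c + 1) / D)
      + z₇ * ((-4 * c ^ 4 + c ^ 3 - 5 * c ^ 2 - c + 1) / D) = c ∧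
    x₇ * (-(c * (c - 1)) / s) + y₇ * ((c - 1) * Real.sqrt (2 * c + 1) / s) + z₇ * (-c) = c := by
  intro c s D x₇ y₇ z₇
  have hc : 0 < c := Real.cos_pos_of_mem_Ioo ⟨by linarith, hr'⟩
  have hs0 : 0 < s := Real.sin_pos_of_pos_of_lt_pi hr (by linarith)
  have hs : s ^ 2 = 1 - c ^ 2 := by
    have := Real.sin_sq_add_cos_sq r
    simp only [s, c]; linarith
  have hq : Real.sqrt (2 * c + 1) ^ 2 = 2 * c + 1 := Real.sq_sqrt (by linarith)
  have hD : D ≠ 0 := by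
    have : 0 < D := by
      simp only [D]
      nlinarith [mul_nonneg hc.le (sq_nonneg (3 * c - 1)), sq_nonneg (5 * c - 1)]
    exact this.ne'
  have hDe : D = 9 * c ^ 3 - c ^ 2 - c + 1 := rfl
  simp only [x₇, y₇, z₇]
  generalize Real.sqrt (2 * c + 1) = q at *
  clear_value D c s
  have hs1 : s ≠ 0 := hs0.ne'
  refine ⟨?_, ?_, ?_⟩
  · have key : (s * (c ^ 3 - 5 * c ^ 2 - c + 1)) ^ 2 + (-(4 * s * c ^ 2 * q)) ^ 2
        + (-(c * (c ^ 3 + 11 * c ^ 2 - c - 3))) ^ 2 = D ^ 2 := by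
      rw [hDe]
      linear_combination ((c ^ 3 - 5 * c ^ 2 - c + 1) ^ 2 + 16 * c ^ 4 * q ^ 2) * hs
        + 16 * c ^ 4 * (1 - c ^ 2) * hq
    rw [div_pow, div_pow, div_pow, ← add_div, ← add_div, key, div_self (pow_ne_zero 2 hD)]
  · have key : (s * (c ^ 3 - 5 * c ^ 2 - c + 1)) * (2 * c * s * (c - 1) * (2 * c + 1))
        + (-(4 * s * c ^ 2 * q)) * (2 * c * s * (c - 1) * q)
        + (-(c * (c ^ 3 + 11 * c ^ 2 - c - 3))) * (-4 * c ^ 4 + c ^ 3 - 5 * c ^ 2 - c + 1)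
        = c * (D * D) := by
      rw [hDe]
      linear_combination
        2 * c * (c - 1) * ((2 * c + 1) * (c ^ 3 - 5 * c ^ 2 - c + 1) - 4 * c ^ 2 * q ^ 2) * hs
        - 8 * c ^ 3 * (c - 1) * (1 - c ^ 2) * hq
    rw [div_mul_div_comm, div_mul_div_comm, div_mul_div_comm, ← add_div, ← add_div, key,
      mul_div_assoc, div_self (mul_ne_zero hD hD), mul_one]
  · have key : (c ^ 3 - 5 * c ^ 2 - c + 1) * (-(c * (c - 1)))
        + (-(4 * c ^ 2 * q)) * ((c - 1) * q)
        + (-(c * (c ^ 3 + 11 * c ^ 2 - c - 3))) * (-c) = c * D := by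
      rw [hDe]
      linear_combination (-4 * c ^ 2 * (c - 1)) * hq
    clear hDe
    have h2 : s * (c ^ 3 - 5 * c ^ 2 - c + 1) / D * (-(c * (c - 1)) / s)
        + -(4 * s * c ^ 2 * q) / D * ((c - 1) * q / s)
        + -(c * (c ^ 3 + 11 * c ^ 2 - c - 3)) / D * (-c)
        = ((c ^ 3 - 5 * c ^ 2 - c + 1) * (-(c * (c - 1)))
        + (-(4 * c ^ 2 * q)) * ((c - 1) * q)
        + (-(c * (c ^ 3 + 11 * c ^ 2 - c - 3))) * (-c)) / D := by
      field_simp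
    rw [h2, key, mul_div_assoc, div_self hD, mul_one]
end

section
/- Let r₁₀ := arctan(√((4/√3)·cos((1/3)·arctan(√687/9)) + 3)), write c := cos r₁₀ and D := 9c³ − c² − c + 1, and define the unit vectors M₃ := (sin r₁₀, 0, −c), M₆ := (2c·sin r₁₀·(c − 1)(2c + 1)/D, 2c·sin r₁₀·(c − 1)√(2c + 1)/D, (−4c⁴ + c³ − 5c² − c + 1)/D), and M₇ := (sin r₁₀·(c³ − 5c² − c + 1)/D, −4 sin r₁₀·c²·√(2c + 1)/D, −c(c³ + 11c² − c − 3)/D). Then there exists a unit vector w ∈ ℝ³ satisfying simultaneously ⟨M₃, w⟩ = c, ⟨M₆, w⟩ = (3c³ + 2c² − c − 2(1 − c²)·√(c + 2c²))/(1 + c)², and ⟨M₇, w⟩ = c. -/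
open Real

theorem aux_u :
    0 < 4 / Real.sqrt 3 * Real.cos ((1 / 3) * Real.arctan (Real.sqrt 687 / 9)) ∧
    (4 / Real.sqrt 3 * Real.cos ((1 / 3) * Real.arctan (Real.sqrt 687 / 9))) ^ 3
      - 4 * (4 / Real.sqrt 3 * Real.cos ((1 / 3) * Real.arctan (Real.sqrt 687 / 9))) = 1 := by
  have h3 : Real.sqrt 3 ^ 2 = 3 := Real.sq_sqrt (by norm_num)
  have h3p : 0 < Real.sqrt 3 := Real.sqrt_pos.mpr (by norm_num)
  set t := Real.arctan (Real.sqrt 687 / 9) with ht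
  have h1 : t < π / 2 := Real.arctan_lt_pi_div_two _
  have h2 : -(π / 2) < t := Real.neg_pi_div_two_lt_arctan _
  have hc : 0 < Real.cos ((1 / 3) * t) :=
    Real.cos_pos_of_mem_Ioo ⟨by linarith [Real.pi_pos], by linarith [Real.pi_pos]⟩
  have hcos : Real.cos t = 9 / (16 * Real.sqrt 3) := by
    rw [ht, Real.cos_arctan, div_pow, Real.sq_sqrt (by norm_num)]
    have : Real.sqrt (1 + 687 / 9 ^ 2) = 16 * Real.sqrt 3 / 9 := by
      rw [Real.sqrt_eq_iff_mul_self_eq (by norm_num) (by positivity)]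
      nlinarith
    rw [this]
    field_simp
  have h := Real.cos_three_mul ((1 / 3) * t)
  rw [show 3 * ((1 / 3) * t) = t by ring, hcos] at h
  refine ⟨by positivity, ?_⟩
  generalize Real.cos ((1 / 3) * t) = y at *
  generalize Real.sqrt 3 = w at *
  have hw : w ≠ 0 := h3p.ne'
  field_simp at h ⊢
  grind

theorem aux_c (u : ℝ) (hu : 0 < u) (h : u ^ 3 - 4 * u = 1) (c : ℝ) (hc : 0 < c)
    (hcu : c ^ 2 * (u + 4) = 1) :
    c ^ 2 < 1 / 4 ∧ 7 * c ^ 3 - 4 * c ^ 2 - 2 * c + 1 = 0 := by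
  have h4 : c ^ 2 < 1 / 4 := by nlinarith [mul_pos (pow_pos hc 2) hu]
  refine ⟨h4, ?_⟩
  have hm : (7 * c ^ 3 - 4 * c ^ 2 - 2 * c + 1) * (7 * c ^ 3 + 4 * c ^ 2 - 2 * c - 1) = 0 := by
    grind
  rcases mul_eq_zero.mp hm with h | h
  · exact h
  · nlinarith


/-- With `r₁₀ = arctan(√((4/√3)·cos((1/3)·arctan(√687/9)) + 3))`, `c = cos r₁₀` and
`D = 9c³ − c² − c + 1`, there exists a unit vector `w = (wx, wy, wz) ∈ ℝ³` with
`⟨M₃, w⟩ = c`, `⟨M₆, w⟩ = (3c³ + 2c² − c − 2(1 − c²)√(c + 2c²))/(1 + c)²` and `⟨M₇, w⟩ = c`,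
where `M₃ = (sin r₁₀, 0, −c)`,
`M₆ = (2c·sin r₁₀·(c−1)(2c+1)/D, 2c·sin r₁₀·(c−1)√(2c+1)/D, (−4c⁴+c³−5c²−c+1)/D)` and
`M₇ = (sin r₁₀·(c³−5c²−c+1)/D, −4 sin r₁₀·c²·√(2c+1)/D, −c(c³+11c²−c−3)/D)`. -/
theorem stmt_13 :
    let r₁₀ : ℝ := Real.arctan (Real.sqrt
      (4 / Real.sqrt 3 * Real.cos ((1 / 3) * Real.arctan (Real.sqrt 687 / 9)) + 3))
    let c := Real.cos r₁₀
    let s := Real.sin r₁₀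
    let D := 9 * c ^ 3 - c ^ 2 - c + 1
    ∃ wx wy wz : ℝ,
      wx ^ 2 + wy ^ 2 + wz ^ 2 = 1 ∧
      s * wx + 0 * wy + (-c) * wz = c ∧
      (2 * c * s * (c - 1) * (2 * c + 1) / D) * wx
        + (2 * c * s * (c - 1) * Real.sqrt (2 * c + 1) / D) * wy
        + ((-4 * c ^ 4 + c ^ 3 - 5 * c ^ 2 - c + 1) / D) * wz
        = (3 * c ^ 3 + 2 * c ^ 2 - c - 2 * (1 - c ^ 2) * Real.sqrt (c + 2 * c ^ 2))
            / (1 + c) ^ 2 ∧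
      (s * (c ^ 3 - 5 * c ^ 2 - c + 1) / D) * wx
        + (-(4 * s * c ^ 2 * Real.sqrt (2 * c + 1)) / D) * wy
        + (-(c * (c ^ 3 + 11 * c ^ 2 - c - 3)) / D) * wz = c := by
  intro r c s D
  obtain ⟨hu, hu3⟩ := aux_u
  have hc : 0 < c := Real.cos_arctan_pos _
  have hcu : c ^ 2 * ((4 / Real.sqrt 3 *
      Real.cos ((1 / 3) * Real.arctan (Real.sqrt 687 / 9))) + 4) = 1 := by
    have := Real.cos_sq_arctan (Real.sqrt
      (4 / Real.sqrt 3 * Real.cos ((1 / 3) * Real.arctan (Real.sqrt 687 / 9)) + 3))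
    rw [Real.sq_sqrt (by linarith)] at this
    change c ^ 2 = _ at this
    rw [this, div_mul_eq_mul_div, div_eq_iff (by linarith)]
    ring
  obtain ⟨h4, hP⟩ := aux_c _ hu hu3 c hc hcu
  have hs2 : s ^ 2 = 1 - c ^ 2 := by
    have := Real.sin_sq_add_cos_sq r
    change s ^ 2 + c ^ 2 = 1 at this
    linarith
  have hD : D = 9 * c ^ 3 - c ^ 2 - c + 1 := rfl
  clear_value s c D
  have hs : s ≠ 0 := by
    rintro rfl
    nlinarith
  have hc2 : c < 1 / 2 := by nlinarith
  have hD0 : D ≠ 0 := by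
    have : 0 < c ^ 3 := by positivity
    rw [hD]
    nlinarith
  have hg : Real.sqrt (c + 2 * c ^ 2) = 2 - 7 * c ^ 2 := by
    rw [Real.sqrt_eq_iff_mul_self_eq (by positivity) (by nlinarith)]
    grind
  have hq2 : Real.sqrt (2 * c + 1) ^ 2 = 2 * c + 1 := Real.sq_sqrt (by linarith)
  have hq : Real.sqrt (2 * c + 1) ≠ 0 := (Real.sqrt_pos.mpr (by linarith)).ne'
  have hk : (3 * c ^ 3 + 2 * c ^ 2 - c - 2 * (1 - c ^ 2) * Real.sqrt (c + 2 * c ^ 2))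
            / (1 + c) ^ 2 = -1 - 2 * c + 7 * c ^ 2 := by
    rw [hg, div_eq_iff (by positivity)]
    grind
  rw [hk]
  clear hk hg hcu hu hu3
  generalize Real.sqrt (2 * c + 1) = q at *
  obtain ⟨X, hX⟩ : ∃ X, X = (1 - 2 * c ^ 2) / s := ⟨_, rfl⟩
  obtain ⟨Y, hY⟩ : ∃ Y, Y = -c ^ 2 / (s * q) := ⟨_, rfl⟩
  have hX1 : s * X = 1 - 2 * c ^ 2 := by rw [hX]; field_simp
  have hY1 : s * q * Y = -c ^ 2 := by rw [hY]; field_simp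
  refine ⟨X, Y, 1 + 2 * c - 7 * c ^ 2, ?_, ?_, ?_, ?_⟩
  · have hX2 : s ^ 2 * X ^ 2 = (1 - 2 * c ^ 2) ^ 2 := by rw [← hX1]; ring
    have hY2 : s ^ 2 * q ^ 2 * Y ^ 2 = c ^ 4 := by
      linear_combination (s * q * Y - c ^ 2) * hY1
    have hne : s ^ 2 * q ^ 2 ≠ 0 := by positivity
    apply mul_left_cancel₀ hne
    have : s ^ 2 * q ^ 2 * (X ^ 2 + Y ^ 2 + (1 + 2 * c - 7 * c ^ 2) ^ 2)
      = q ^ 2 * (1 - 2 * c ^ 2) ^ 2 + c ^ 4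
        + s ^ 2 * q ^ 2 * (1 + 2 * c - 7 * c ^ 2) ^ 2 := by
      linear_combination q ^ 2 * hX2 + hY2
    rw [this, hs2, hq2]
    clear this hX hY hX1 hY1 hX2 hY2 hne hs2 hq2
    grind
  · rw [zero_mul, hX1]
    linear_combination hP
  · have e : (2 * c * s * (c - 1) * (2 * c + 1) / D) * X
        + (2 * c * s * (c - 1) * q / D) * Y
        + ((-4 * c ^ 4 + c ^ 3 - 5 * c ^ 2 - c + 1) / D) * (1 + 2 * c - 7 * c ^ 2)
        = (2 * c * (c - 1) * (2 * c + 1) * (s * X) + 2 * c * (c - 1) * (s * q * Y)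
          + (-4 * c ^ 4 + c ^ 3 - 5 * c ^ 2 - c + 1) * (1 + 2 * c - 7 * c ^ 2)) / D := by
      ring
    rw [e, hX1, hY1, div_eq_iff hD0, hD]
    clear e hX hY hX1 hY1 hs2 hq2
    grind
  · have e : (s * (c ^ 3 - 5 * c ^ 2 - c + 1) / D) * X
        + (-(4 * s * c ^ 2 * q) / D) * Y
        + (-(c * (c ^ 3 + 11 * c ^ 2 - c - 3)) / D) * (1 + 2 * c - 7 * c ^ 2)
        = ((c ^ 3 - 5 * c ^ 2 - c + 1) * (s * X) - 4 * c ^ 2 * (s * q * Y)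
          - c * (c ^ 3 + 11 * c ^ 2 - c - 3) * (1 + 2 * c - 7 * c ^ 2)) / D := by
      ring
    rw [e, hX1, hY1, div_eq_iff hD0, hD]
    clear e hX hY hX1 hY1 hs2 hq2
    grind
end
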